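/- arXiv:1911.07357 — 3 statements merged into one kernel-verified Lean document; each statement's English description precedes it below -/
import Mathlib

section
/- There are absolute constants c, C > 0 such that the following holds. Let m ≥ 2, let ℓ be a distribution on {-1,1}^m with β = d_TV(ℓ, U) > 0, let G^{[u]} be the set of uneven edges each directed from its endpoint of larger ℓ-value, and for each integer κ ≥ 1 let G^{[κ]} be any orientation of the set of even edges at scale κ. Then either E_{x∼ℓ}[ √(outdeg(x, G^{[u]})) ] ≥ c·β/log m, or there exists an integer κ with 1 ≤ κ ≤ C·log(2m/β) such that E_{x∼ℓ}[ √(outdeg(x, G^{[κ]})) ] ≥ c · 2^κ · β / ( log m · log(2m/β) ), where outdeg(x, G) is the number of i ∈ [m] with (x, x^{(i)}) ∈ G. -/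
/-! The proof rests on an `L¹` Poincaré inequality in which every nonzero edge is charged to only one of
its endpoints (`oriented_poincare`): for any orientation `H` of the nonzero edges of `f`,
`∑ x, |f x - mean f| ≤ (π / 2) * ∑ x, √(∑ i ∈ H x, (f x - f x⁽ⁱ⁾) ^ 2)`.

To prove it, test `f` against the sign `g` of `f - mean f` and interpolate with the noise operators
`T_t`: at `t = 0` the form `⟨f, T_t g⟩` only sees the means, at `t = 1` it is `⟨f, g⟩`. Its derivative
is a sum of products of discrete derivatives of `f` and of `T_t g`. Each product takes equal values
at both ends of an edge, and vanishes on the zero edges of `f`, so the sum can be collected at the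
tails of `H` (`sum_oriented`). The gradient of `T_t g` (`noiseGrad`) is the vector of correlations of `g`
with the coordinate scores of the noise kernel. The scores are uncorrelated with variance
`1 / (1 - t ^ 2)`, so by Cauchy–Schwarz this gradient has Euclidean norm at most
`1 / √(1 - t ^ 2)` (`noiseGrad_bound`). Substituting `t = sin θ` and applying the mean value theorem
on `[0, π / 2]` gives the inequality, with no loss of a factor `log m`.

Apply it to `ℓ`, directing uneven edges from the heavier endpoint and all other edges according to
their scale (`orient`). On an outgoing uneven edge the difference is at most `ℓ x`; on an even edge
at scale `κ` that is not uneven the endpoints agree up to a factor `3`, so the difference is at most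
`6 * 2 ^ (-κ) * ℓ x`. Hence `β` is at most the uneven term plus the sum over `κ ≤ K` of
`6 * 2 ^ (-κ)` times the term at scale `κ`, plus a truncation error `3 * 2 ^ (-K) * √m`
(`dTVU_le_sum_scales`). With `K = ⌊5 * log (2 * m / β)⌋` the error is below `β / 4`, and one of the
remaining terms must be large.
-/

open scoped Classical

noncomputable section

namespace Subcube

/-- The ±1 value of a Boolean coordinate. -/
def sgn (b : Bool) : ℝ := if b then 1 else -1

/-- Flip coordinate `i` of `x`. -/
def flipAt {ι : Type*} [DecidableEq ι] (i : ι) (x : ι → Bool) : ι → Bool :=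
  Function.update x i (!(x i))

/-- `p` is a probability mass function. -/
def IsDist {α : Type*} [Fintype α] (p : α → ℝ) : Prop :=
  (∀ a, 0 ≤ p a) ∧ ∑ a, p a = 1

/-- Total variation distance to the uniform distribution. -/
def dTVU {α : Type*} [Fintype α] (p : α → ℝ) : ℝ :=
  (1/2) * ∑ a, |p a - 1 / (Fintype.card α : ℝ)|

/-- Probability mass of the event that a sample from `p` agrees with `y` outside `S`. -/
def offMass {n : ℕ} (p : (Fin n → Bool) → ℝ) (S : Finset (Fin n)) (y : Fin n → Bool) : ℝ :=
  ∑ x : Fin n → Bool, if ∀ j ∉ S, x j = y j then p x else 0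

/-- Projection of `p` to the coordinates outside `S`. -/
def projDist {n : ℕ} (p : (Fin n → Bool) → ℝ) (S : Finset (Fin n)) :
    ({i : Fin n // i ∉ S} → Bool) → ℝ :=
  fun u => ∑ x : Fin n → Bool, if ∀ i : {i : Fin n // i ∉ S}, x i.1 = u i then p x else 0

/-- Restriction of `p` with star set `S` and non-star coordinates set according to `y`. -/
def restrictDist {n : ℕ} (p : (Fin n → Bool) → ℝ) (S : Finset (Fin n)) (y : Fin n → Bool) :
    ({i : Fin n // i ∈ S} → Bool) → ℝ :=
  fun z =>
    (∑ x : Fin n → Bool,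
      if (∀ i : {i : Fin n // i ∈ S}, x i.1 = z i) ∧ (∀ j ∉ S, x j = y j) then p x else 0)
      / offMass p S y

/-- Mean of coordinate `i` of `p` conditioned on agreeing with `y` outside `S`
(the coordinate `i` of the mean vector of the restriction with star set `S`, for `i ∈ S`). -/
def condMean {n : ℕ} (p : (Fin n → Bool) → ℝ) (S : Finset (Fin n)) (y : Fin n → Bool)
    (i : Fin n) : ℝ :=
  (∑ x : Fin n → Bool, if ∀ j ∉ S, x j = y j then p x * sgn (x i) else 0) / offMass p S y

/-- Mean vector of a distribution on a Boolean cube. -/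
def meanVec {ι : Type*} [Fintype ι] (p : (ι → Bool) → ℝ) : ι → ℝ :=
  fun i => ∑ x : ι → Bool, p x * sgn (x i)

/-- Squared Euclidean norm. -/
def normSq {ι : Type*} [Fintype ι] (v : ι → ℝ) : ℝ := ∑ i, v i ^ 2

/-- Euclidean norm. -/
def l2norm {ι : Type*} [Fintype ι] (v : ι → ℝ) : ℝ := Real.sqrt (normSq v)

/-- Weight of the hypercube edge `{x, x^{(i)}}` with respect to `ℓ`. -/
def edgeWeight {m : ℕ} (ℓ : (Fin m → Bool) → ℝ) (x : Fin m → Bool) (i : Fin m) : ℝ :=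
  |ℓ x - ℓ (flipAt i x)| / max (ℓ x) (ℓ (flipAt i x))

/-- The edge `{x, x^{(i)}}` is nonzero and has weight at least `2/3`. -/
def Uneven {m : ℕ} (ℓ : (Fin m → Bool) → ℝ) (x : Fin m → Bool) (i : Fin m) : Prop :=
  ℓ x ≠ ℓ (flipAt i x) ∧ 2/3 ≤ edgeWeight ℓ x i

/-- The edge `{x, x^{(i)}}` is nonzero and even at scale `κ`: `2^{-κ} < w ≤ 2^{-κ+1}`. -/
def EvenScale {m : ℕ} (ℓ : (Fin m → Bool) → ℝ) (κ : ℕ) (x : Fin m → Bool) (i : Fin m) : Prop :=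
  ℓ x ≠ ℓ (flipAt i x) ∧ (2:ℝ) ^ (-(κ:ℤ)) < edgeWeight ℓ x i ∧
    edgeWeight ℓ x i ≤ (2:ℝ) ^ (1 - (κ:ℤ))


/-! ### The noise kernel on the cube -/

lemma sgn_flip {m : ℕ} (i : Fin m) (x : Fin m → Bool) : sgn (flipAt i x i) = -sgn (x i) := by
  cases h : x i <;> simp [flipAt, sgn, h]

lemma flipAt_ne {m : ℕ} {i j : Fin m} (h : j ≠ i) (x : Fin m → Bool) : flipAt i x j = x j := by
  simp [flipAt, h]

lemma flipAt_flipAt {m : ℕ} (i : Fin m) (x : Fin m → Bool) : flipAt i (flipAt i x) = x := by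
  simp [flipAt]

lemma sgn_mul_self (b : Bool) : sgn b * sgn b = 1 := by
  cases b <;> simp [sgn]

lemma sum_flip {m : ℕ} (i : Fin m) (φ : (Fin m → Bool) → ℝ) :
    ∑ x, φ (flipAt i x) = ∑ x, φ x :=
  Equiv.sum_comp (Function.Involutive.toPerm (flipAt i) (flipAt_flipAt i)) φ

/-- The noise kernel: the probability of `z` when each coordinate of `z` is drawn independently
with correlation `t` to the corresponding coordinate of `x`. -/
def noise {m : ℕ} (t : ℝ) (x z : Fin m → Bool) : ℝ :=
  ∏ j, (1 + t * (sgn (x j) * sgn (z j))) / 2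

/-- The noise kernel with the factor of coordinate `i` left out. -/
def noiseErase {m : ℕ} (t : ℝ) (i : Fin m) (x z : Fin m → Bool) : ℝ :=
  ∏ j ∈ Finset.univ.erase i, (1 + t * (sgn (x j) * sgn (z j))) / 2

/-- The `i`-th partial derivative, at the point `t x` of the solid cube, of the multilinear
extension of `g`. This extension takes at `t x` the value `T_t g x`. -/
def noiseGrad {m : ℕ} (g : (Fin m → Bool) → ℝ) (t : ℝ) (i : Fin m) (x : Fin m → Bool) : ℝ :=
  ∑ z, g z * (noiseErase t i x z * (sgn (z i) / 2))

lemma noise_eq {m : ℕ} (t : ℝ) (i : Fin m) (x z : Fin m → Bool) :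
    noise t x z = (1 + t * (sgn (x i) * sgn (z i))) / 2 * noiseErase t i x z :=
  (Finset.mul_prod_erase Finset.univ _ (Finset.mem_univ i)).symm

lemma noiseErase_flip_left {m : ℕ} (t : ℝ) (i : Fin m) (x z : Fin m → Bool) :
    noiseErase t i (flipAt i x) z = noiseErase t i x z := by
  refine Finset.prod_congr rfl fun j hj => ?_
  rw [flipAt_ne (Finset.ne_of_mem_erase hj)]

lemma noiseErase_flip_right {m : ℕ} (t : ℝ) (i : Fin m) (x z : Fin m → Bool) :
    noiseErase t i x (flipAt i z) = noiseErase t i x z := by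
  refine Finset.prod_congr rfl fun j hj => ?_
  rw [flipAt_ne (Finset.ne_of_mem_erase hj)]

lemma noiseGrad_flip {m : ℕ} (g : (Fin m → Bool) → ℝ) (t : ℝ) (i : Fin m) (x : Fin m → Bool) :
    noiseGrad g t i (flipAt i x) = noiseGrad g t i x := by
  simp only [noiseGrad, noiseErase_flip_left]

lemma sum_noise {m : ℕ} (t : ℝ) (x : Fin m → Bool) : ∑ z, noise t x z = 1 := by
  unfold noise
  have h := Finset.prod_univ_sum (fun _ : Fin m => (Finset.univ : Finset Bool))
    (fun j b => (1 + t * (sgn (x j) * sgn b)) / 2)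
  rw [Fintype.piFinset_univ] at h
  rw [← h]
  refine Finset.prod_eq_one fun _ _ => ?_
  simp [sgn]
  ring

lemma noise_factor_pos {t : ℝ} (h0 : -1 < t) (h1 : t < 1) (a b : Bool) :
    0 < 1 + t * (sgn a * sgn b) := by
  cases a <;> cases b <;> simp [sgn] <;> linarith

lemma noise_pos {m : ℕ} {t : ℝ} (h0 : -1 < t) (h1 : t < 1) (x z : Fin m → Bool) :
    0 < noise t x z :=
  Finset.prod_pos fun _ _ => half_pos (noise_factor_pos h0 h1 _ _)

/-! ### Scores and the gradient bound -/

/-- The score of coordinate `i`: the derivative of the logarithm of the factor `(1 + ρ * sgn (z i)) / 2` of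
the noise kernel in its parameter `ρ`, at `ρ = t * sgn (x i)`. Under `noise t x` the scores are
centred and uncorrelated. -/
def score {m : ℕ} (t : ℝ) (x : Fin m → Bool) (i : Fin m) (z : Fin m → Bool) : ℝ :=
  sgn (z i) / (1 + t * (sgn (x i) * sgn (z i)))

lemma noise_mul_score {m : ℕ} {t : ℝ} (h0 : -1 < t) (h1 : t < 1) (x z : Fin m → Bool)
    (i : Fin m) : noise t x z * score t x i z = noiseErase t i x z * (sgn (z i) / 2) := by
  have := (noise_factor_pos h0 h1 (x i) (z i)).ne'
  rw [noise_eq t i, score]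
  generalize 1 + t * (sgn (x i) * sgn (z i)) = u at this ⊢
  field_simp

lemma sum_noise_score_mul_score {m : ℕ} {t : ℝ} (h0 : -1 < t) (h1 : t < 1) (x : Fin m → Bool)
    {i j : Fin m} (hij : i ≠ j) :
    ∑ z, noise t x z * score t x i z * score t x j z = 0 := by
  have h := sum_flip i fun z => noise t x z * score t x i z * score t x j z
  have h' : ∀ z, noise t x (flipAt i z) * score t x i (flipAt i z) * score t x j (flipAt i z)
      = -(noise t x z * score t x i z * score t x j z) := by
    intro z
    rw [noise_mul_score h0 h1, noise_mul_score h0 h1, noiseErase_flip_right, sgn_flip]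
    simp only [score, flipAt_ne hij.symm]
    ring
  simp only [h', Finset.sum_neg_distrib] at h
  linarith

lemma sum_noise_score_sq {m : ℕ} {t : ℝ} (h0 : -1 < t) (h1 : t < 1) (x : Fin m → Bool)
    (i : Fin m) : ∑ z, noise t x z * score t x i z * score t x i z = 1 / (1 - t ^ 2) := by
  have hp := sum_flip i fun z => noise t x z * score t x i z * score t x i z
  have hq := sum_flip i fun z => noise t x z
  have key : ∀ z, noise t x z * score t x i z * score t x i z
      + noise t x (flipAt i z) * score t x i (flipAt i z) * score t x i (flipAt i z)
      = (noise t x z + noise t x (flipAt i z)) * (1 / (1 - t ^ 2)) := by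
    intro z
    rw [noise_mul_score h0 h1, noise_mul_score h0 h1, noiseErase_flip_right,
      noise_eq t i x z, noise_eq t i x (flipAt i z), noiseErase_flip_right]
    simp only [score, sgn_flip]
    have ha : (1 + t) ≠ 0 := by linarith
    have hb : (1 - t) ≠ 0 := by linarith
    have hb' : (1 + -t) ≠ 0 := by linarith
    have hc : (1 - t ^ 2) = (1 + t) * (1 - t) := by ring
    rw [hc]
    cases x i <;> cases z i <;> simp [sgn] <;> field_simp <;> ring
  have := Finset.sum_congr (rfl : (Finset.univ : Finset (Fin m → Bool)) = _)
    fun z _ => key z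
  rw [Finset.sum_add_distrib, ← Finset.sum_mul, Finset.sum_add_distrib, hp, hq, sum_noise] at this
  linarith

/-- The Bessel-type bound: because the scores are uncorrelated with variance `1 / (1 - t ^ 2)`,
the gradient at `t x` of the multilinear extension of a function bounded by `1` has squared
Euclidean norm at most `1 / (1 - t ^ 2)`, here expressed by pairing it with a vector `a`. -/
lemma noiseGrad_bound {m : ℕ} {t : ℝ} (h0 : -1 < t) (h1 : t < 1) (g : (Fin m → Bool) → ℝ)
    (hg : ∀ z, |g z| ≤ 1) (x : Fin m → Bool) (a : Fin m → ℝ) :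
    (∑ i, a i * noiseGrad g t i x) ^ 2 ≤ (∑ i, a i ^ 2) / (1 - t ^ 2) := by
  have e1 : ∑ i, a i * noiseGrad g t i x
      = ∑ z, noise t x z * (g z * ∑ i, a i * score t x i z) := by
    simp only [noiseGrad, Finset.mul_sum]
    rw [Finset.sum_comm]
    refine Finset.sum_congr rfl fun z _ => Finset.sum_congr rfl fun i _ => ?_
    rw [← noise_mul_score h0 h1]
    ring
  have cs : (∑ z, noise t x z * (g z * ∑ i, a i * score t x i z)) ^ 2
      ≤ (∑ z, noise t x z) * ∑ z, noise t x z * (g z * ∑ i, a i * score t x i z) ^ 2 :=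
    Finset.sum_sq_le_sum_mul_sum_of_sq_le_mul _ (fun z _ => (noise_pos h0 h1 x z).le)
      (fun z _ => mul_nonneg (noise_pos h0 h1 x z).le (sq_nonneg _)) (fun z _ => le_of_eq (by ring))
  rw [sum_noise, one_mul] at cs
  rw [e1]
  refine cs.trans ?_
  have e2 : ∑ z, noise t x z * (g z * ∑ i, a i * score t x i z) ^ 2
      ≤ ∑ z, noise t x z * (∑ i, a i * score t x i z) ^ 2 := by
    refine Finset.sum_le_sum fun z _ => mul_le_mul_of_nonneg_left ?_ (noise_pos h0 h1 x z).le
    rw [mul_pow]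
    exact mul_le_of_le_one_left (sq_nonneg _) ((sq_le_one_iff_abs_le_one _).2 (hg z))
  refine e2.trans (le_of_eq ?_)
  have e3 : ∀ z, noise t x z * (∑ i, a i * score t x i z) ^ 2
      = ∑ i, ∑ j, a i * a j * (noise t x z * score t x i z * score t x j z) := by
    intro z
    rw [sq, Finset.sum_mul_sum, Finset.mul_sum]
    refine Finset.sum_congr rfl fun i _ => ?_
    rw [Finset.mul_sum]
    exact Finset.sum_congr rfl fun j _ => by ring
  simp only [e3]
  rw [Finset.sum_comm, Finset.sum_div]
  refine Finset.sum_congr rfl fun i _ => ?_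
  rw [Finset.sum_comm, Finset.sum_eq_single i]
  · rw [← Finset.mul_sum, sum_noise_score_sq h0 h1]
    ring
  · intro j _ hj
    rw [← Finset.mul_sum, sum_noise_score_mul_score h0 h1 x hj.symm, mul_zero]
  · simp

/-! ### The oriented Poincaré inequality -/

lemma noise_zero {m : ℕ} (x z : Fin m → Bool) : noise 0 x z = 1 / 2 ^ m := by
  simp [noise]

lemma noise_one {m : ℕ} (x z : Fin m → Bool) : noise 1 x z = if z = x then 1 else 0 := by
  unfold noise
  split_ifs with h
  · subst h
    exact Finset.prod_eq_one fun j _ => by rw [sgn_mul_self]; norm_num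
  · obtain ⟨j, hj⟩ := Function.ne_iff.1 h
    refine Finset.prod_eq_zero (Finset.mem_univ j) ?_
    revert hj
    cases x j <;> cases z j <;> simp [sgn]

lemma hasDerivAt_noise {m : ℕ} (x z : Fin m → Bool) (t : ℝ) :
    HasDerivAt (fun t => noise t x z)
      (∑ i, sgn (x i) * (noiseErase t i x z * (sgn (z i) / 2))) t := by
  have h := HasDerivAt.fun_finsetProd (u := (Finset.univ : Finset (Fin m)))
    (f := fun j t => (1 + t * (sgn (x j) * sgn (z j))) / 2)
    (f' := fun j => (1 * (sgn (x j) * sgn (z j))) / 2) (x := t)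
    (fun j _ => (((hasDerivAt_id t).mul_const _).const_add 1).div_const 2)
  refine h.congr_deriv (Finset.sum_congr rfl fun i _ => ?_)
  simp only [noiseErase, smul_eq_mul]
  ring

/-- The form `⟨f, T_t g⟩` (unnormalised), where `T_t` is the noise operator. -/
def noiseForm {m : ℕ} (f g : (Fin m → Bool) → ℝ) (t : ℝ) : ℝ :=
  ∑ x, f x * ∑ z, g z * noise t x z

lemma hasDerivAt_noiseForm {m : ℕ} (f g : (Fin m → Bool) → ℝ) (t : ℝ) :
    HasDerivAt (noiseForm f g) (∑ i, ∑ x, f x * (sgn (x i) * noiseGrad g t i x)) t := by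
  have h : HasDerivAt (noiseForm f g)
      (∑ x, f x * ∑ z, g z * ∑ i, sgn (x i) * (noiseErase t i x z * (sgn (z i) / 2))) t := by
    unfold noiseForm
    exact HasDerivAt.fun_sum fun x _ => HasDerivAt.const_mul _ <|
      HasDerivAt.fun_sum fun z _ => (hasDerivAt_noise x z t).const_mul _
  refine h.congr_deriv ?_
  rw [Finset.sum_comm]
  refine Finset.sum_congr rfl fun x _ => ?_
  rw [← Finset.mul_sum]
  congr 1
  simp only [noiseGrad, Finset.mul_sum]
  rw [Finset.sum_comm]
  exact Finset.sum_congr rfl fun i _ => Finset.sum_congr rfl fun z _ => by ring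

/-- Summation by parts along the oriented edges. The product
`(f x - f x⁽ⁱ⁾) * (sgn (x i) * A x)` takes the same value at both endpoints of an edge, so a sum
over all vertices is twice the sum over one endpoint of each edge. -/
lemma sum_oriented {m : ℕ} (f : (Fin m → Bool) → ℝ) (i : Fin m) (A : (Fin m → Bool) → ℝ)
    (hA : ∀ x, A (flipAt i x) = A x) (H : (Fin m → Bool) → Prop)
    (hH : ∀ x, f x ≠ f (flipAt i x) → (H x ↔ ¬ H (flipAt i x))) :
    ∑ x, f x * (sgn (x i) * A x)
      = ∑ x, (if H x then f x - f (flipAt i x) else 0) * sgn (x i) * A x := by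
  set k : (Fin m → Bool) → ℝ := fun x => f x * (sgn (x i) * A x) with hk
  set r : (Fin m → Bool) → ℝ :=
    fun x => (if H x then f x - f (flipAt i x) else 0) * sgn (x i) * A x with hr
  have key : ∀ x, k x + k (flipAt i x) = r x + r (flipAt i x) := by
    intro x
    simp only [hk, hr, hA, sgn_flip, flipAt_flipAt]
    by_cases hx : f x = f (flipAt i x)
    · simp [hx]
    · have := hH x hx
      by_cases h1 : H x
      · have h2 := this.1 h1
        simp only [h1, h2, if_true, if_false]
        ring
      · have h2 : H (flipAt i x) := by tauto
        simp only [h1, h2, if_true, if_false]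
        ring
  have := Finset.sum_congr (rfl : (Finset.univ : Finset (Fin m → Bool)) = _) fun x _ => key x
  rw [Finset.sum_add_distrib, Finset.sum_add_distrib, sum_flip, sum_flip] at this
  linarith

/-- A dual form of the oriented `L¹` Poincaré inequality, for a test function `g` bounded by `1`.
Along `t = sin θ` the derivative of `⟨f, T_t g⟩` is bounded uniformly in `θ`, and `θ` runs over an
interval of length `π / 2`. -/
lemma oriented_poincare_dual {m : ℕ} (f g : (Fin m → Bool) → ℝ) (hg : ∀ z, |g z| ≤ 1)
    (H : (Fin m → Bool) → Fin m → Prop)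
    (hH : ∀ x i, f x ≠ f (flipAt i x) → (H x i ↔ ¬ H (flipAt i x) i)) :
    ∑ x, f x * g x - (∑ x, f x) * (∑ z, g z) / 2 ^ m
      ≤ Real.pi / 2 *
        ∑ x, Real.sqrt (∑ i, (if H x i then f x - f (flipAt i x) else 0) ^ 2) := by
  have hd : ∀ θ, HasDerivAt (fun θ => noiseForm f g (Real.sin θ))
      ((∑ i, ∑ x, f x * (sgn (x i) * noiseGrad g (Real.sin θ) i x)) * Real.cos θ) θ :=
    fun θ => (hasDerivAt_noiseForm f g (Real.sin θ)).comp θ (Real.hasDerivAt_sin θ)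
  obtain ⟨θ, hθ, hs⟩ := exists_hasDerivAt_eq_slope _ _ Real.pi_div_two_pos
    (fun θ _ => (hd θ).continuousAt.continuousWithinAt) (fun θ _ => hd θ)
  have hcos : 0 < Real.cos θ :=
    Real.cos_pos_of_mem_Ioo ⟨by linarith [hθ.1, Real.pi_pos], hθ.2⟩
  have hsc := Real.sin_sq_add_cos_sq θ
  have ht : |Real.sin θ| < 1 := by
    rw [← sq_lt_one_iff_abs_lt_one]
    nlinarith
  obtain ⟨h0, h1⟩ := abs_lt.1 ht
  have hb : (∑ i, ∑ x, f x * (sgn (x i) * noiseGrad g (Real.sin θ) i x)) * Real.cos θ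
      ≤ ∑ x, Real.sqrt (∑ i, (if H x i then f x - f (flipAt i x) else 0) ^ 2) := by
    rw [Finset.sum_congr rfl fun i _ => sum_oriented f i (noiseGrad g (Real.sin θ) i)
      (noiseGrad_flip g _ i) (fun x => H x i) (fun x => hH x i), Finset.sum_comm,
      Finset.sum_mul]
    refine Finset.sum_le_sum fun x _ => ?_
    refine Real.le_sqrt_of_sq_le ?_
    have := noiseGrad_bound h0 h1 g hg x
      (fun i => (if H x i then f x - f (flipAt i x) else 0) * sgn (x i))
    have e : 1 - Real.sin θ ^ 2 = Real.cos θ ^ 2 := by linarith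
    rw [e, le_div_iff₀ (by positivity), ← mul_pow] at this
    refine this.trans (le_of_eq (Finset.sum_congr rfl fun i _ => ?_))
    rw [mul_pow, sq (sgn _), sgn_mul_self, mul_one]
  rw [hs, div_le_iff₀ (by linarith [Real.pi_pos]), Real.sin_pi_div_two, Real.sin_zero] at hb
  have f1 : noiseForm f g 1 = ∑ x, f x * g x := by
    simp [noiseForm, noise_one]
  have f0 : noiseForm f g 0 = (∑ x, f x) * (∑ z, g z) / 2 ^ m := by
    simp only [noiseForm, noise_zero, ← Finset.sum_mul]
    ring
  rw [f1, f0] at hb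
  linarith

/-- The oriented `L¹` Poincaré inequality on the cube: the distance of `f` from its mean is
controlled by the `ℓ²` gradient in which each nonzero edge is charged to one endpoint only. -/
lemma oriented_poincare {m : ℕ} (f : (Fin m → Bool) → ℝ) (H : (Fin m → Bool) → Fin m → Prop)
    (hH : ∀ x i, f x ≠ f (flipAt i x) → (H x i ↔ ¬ H (flipAt i x) i)) :
    ∑ x, |f x - (∑ y, f y) / 2 ^ m|
      ≤ Real.pi / 2 *
        ∑ x, Real.sqrt (∑ i, (if H x i then f x - f (flipAt i x) else 0) ^ 2) := by
  set μ := (∑ y, f y) / 2 ^ m with hμ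
  have h := oriented_poincare_dual f (fun x => SignType.sign (f x - μ)) (fun z => by
    rcases lt_trichotomy (f z - μ) 0 with h | h | h <;> simp [h]) H hH
  refine le_trans (le_of_eq ?_) h
  have : ∀ x, |f x - μ| = f x * (SignType.sign (f x - μ) : ℝ)
      - μ * (SignType.sign (f x - μ) : ℝ) := by
    intro x
    rw [← sub_mul, self_mul_sign]
  simp only [this, Finset.sum_sub_distrib, ← Finset.mul_sum]
  rw [hμ]
  ring

/-! ### Scales of edges and the combined orientation -/

/-- The scale `κ ≥ 1` of an edge weight `w ∈ (0, 1]`, so that `2 ^ (-κ) < w ≤ 2 ^ (1 - κ)`;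
the value for other `w` is immaterial. -/
def scale (w : ℝ) : ℕ :=
  if h : ∃ κ : ℕ, 1 ≤ κ ∧ (2:ℝ) ^ (-(κ:ℤ)) < w ∧ w ≤ (2:ℝ) ^ (1 - (κ:ℤ)) then h.choose else 1

lemma one_le_scale (w : ℝ) : 1 ≤ scale w := by
  unfold scale
  split_ifs with h
  · exact h.choose_spec.1
  · exact le_rfl

lemma scale_spec {w : ℝ} (h0 : 0 < w) (h1 : w ≤ 1) :
    (2:ℝ) ^ (-(scale w:ℤ)) < w ∧ w ≤ (2:ℝ) ^ (1 - (scale w:ℤ)) := by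
  have h : ∃ κ : ℕ, 1 ≤ κ ∧ (2:ℝ) ^ (-(κ:ℤ)) < w ∧ w ≤ (2:ℝ) ^ (1 - (κ:ℤ)) := by
    obtain ⟨n, hn1, hn2⟩ := exists_nat_pow_near_of_lt_one h0 h1
      (by norm_num : (0:ℝ) < 1 / 2) (by norm_num : (1:ℝ) / 2 < 1)
    refine ⟨n + 1, by omega, ?_, ?_⟩
    · rw [zpow_neg, zpow_natCast]
      simpa using hn1
    · have : (1 - ((n + 1 : ℕ) : ℤ)) = -(n : ℤ) := by push_cast; ring
      rw [this, zpow_neg, zpow_natCast]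
      simpa using hn2
  unfold scale
  rw [dif_pos h]
  exact h.choose_spec.2

lemma edgeWeight_flip {m : ℕ} (ℓ : (Fin m → Bool) → ℝ) (x : Fin m → Bool) (i : Fin m) :
    edgeWeight ℓ (flipAt i x) i = edgeWeight ℓ x i := by
  simp only [edgeWeight, flipAt_flipAt, abs_sub_comm, max_comm]

lemma uneven_flip {m : ℕ} (ℓ : (Fin m → Bool) → ℝ) (x : Fin m → Bool) (i : Fin m) :
    Uneven ℓ (flipAt i x) i ↔ Uneven ℓ x i := by
  simp only [Uneven, edgeWeight_flip, flipAt_flipAt, ne_comm]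

lemma max_pos_of_ne {m : ℕ} {ℓ : (Fin m → Bool) → ℝ} (hℓ : ∀ x, 0 ≤ ℓ x)
    {x : Fin m → Bool} {i : Fin m} (hne : ℓ x ≠ ℓ (flipAt i x)) :
    0 < max (ℓ x) (ℓ (flipAt i x)) := by
  rcases lt_or_gt_of_ne hne with h | h
  · exact lt_max_of_lt_right ((hℓ x).trans_lt h)
  · exact lt_max_of_lt_left ((hℓ _).trans_lt h)

lemma edgeWeight_mul_max {m : ℕ} {ℓ : (Fin m → Bool) → ℝ} (hℓ : ∀ x, 0 ≤ ℓ x)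
    {x : Fin m → Bool} {i : Fin m} (hne : ℓ x ≠ ℓ (flipAt i x)) :
    edgeWeight ℓ x i * max (ℓ x) (ℓ (flipAt i x)) = |ℓ x - ℓ (flipAt i x)| :=
  div_mul_cancel₀ _ (max_pos_of_ne hℓ hne).ne'

lemma edgeWeight_pos {m : ℕ} {ℓ : (Fin m → Bool) → ℝ} (hℓ : ∀ x, 0 ≤ ℓ x)
    {x : Fin m → Bool} {i : Fin m} (hne : ℓ x ≠ ℓ (flipAt i x)) : 0 < edgeWeight ℓ x i :=
  div_pos (abs_pos.2 (sub_ne_zero.2 hne)) (max_pos_of_ne hℓ hne)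

lemma edgeWeight_le_one {m : ℕ} {ℓ : (Fin m → Bool) → ℝ} (hℓ : ∀ x, 0 ≤ ℓ x)
    {x : Fin m → Bool} {i : Fin m} (hne : ℓ x ≠ ℓ (flipAt i x)) : edgeWeight ℓ x i ≤ 1 := by
  refine div_le_one_of_le₀ ?_ (max_pos_of_ne hℓ hne).le
  have h1 := hℓ x
  have h2 := hℓ (flipAt i x)
  have h3 := le_max_left (ℓ x) (ℓ (flipAt i x))
  have h4 := le_max_right (ℓ x) (ℓ (flipAt i x))
  exact abs_le.2 ⟨by linarith, by linarith⟩

lemma evenScale_scale {m : ℕ} {ℓ : (Fin m → Bool) → ℝ} (hℓ : ∀ x, 0 ≤ ℓ x)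
    {x : Fin m → Bool} {i : Fin m} (hne : ℓ x ≠ ℓ (flipAt i x)) :
    EvenScale ℓ (scale (edgeWeight ℓ x i)) x i :=
  ⟨hne, scale_spec (edgeWeight_pos hℓ hne) (edgeWeight_le_one hℓ hne)⟩

/-- The endpoints of an edge that is not uneven have masses within a factor `3`, so either of them
controls the difference, up to the weight. -/
lemma abs_sub_le_of_not_uneven {m : ℕ} {ℓ : (Fin m → Bool) → ℝ} (hℓ : ∀ x, 0 ≤ ℓ x)
    {x : Fin m → Bool} {i : Fin m} (hne : ℓ x ≠ ℓ (flipAt i x))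
    (hu : ¬ Uneven ℓ x i) :
    |ℓ x - ℓ (flipAt i x)| ≤ edgeWeight ℓ x i * (3 * ℓ x) := by
  have hw : edgeWeight ℓ x i < 2 / 3 := by
    by_contra h
    exact hu ⟨hne, not_lt.1 h⟩
  have hp := max_pos_of_ne hℓ hne
  rw [← edgeWeight_mul_max hℓ hne]
  refine mul_le_mul_of_nonneg_left ?_ (edgeWeight_pos hℓ hne).le
  have h1 : |ℓ x - ℓ (flipAt i x)| ≤ 2 / 3 * max (ℓ x) (ℓ (flipAt i x)) := by
    rw [← edgeWeight_mul_max hℓ hne]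
    exact mul_le_mul_of_nonneg_right hw.le hp.le
  have h2 := neg_abs_le (ℓ x - ℓ (flipAt i x))
  have h3 := hℓ x
  rcases max_choice (ℓ x) (ℓ (flipAt i x)) with h | h <;> rw [h] at h1 ⊢ <;> linarith

/-- The orientation of all nonzero edges used in the Poincaré inequality: an uneven edge points
away from its heavier endpoint, any other edge follows the given orientation at its scale. The
first case takes precedence for the uneven edges, which also lie at scale `1`. -/
def orient {m : ℕ} (ℓ : (Fin m → Bool) → ℝ) (G : ℕ → (Fin m → Bool) → Fin m → Bool)
    (x : Fin m → Bool) (i : Fin m) : Prop :=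
  ℓ x ≠ ℓ (flipAt i x) ∧
    if Uneven ℓ x i then ℓ (flipAt i x) < ℓ x else G (scale (edgeWeight ℓ x i)) x i = true

lemma orient_iff {m : ℕ} {ℓ : (Fin m → Bool) → ℝ} (hℓ : ∀ x, 0 ≤ ℓ x)
    {G : ℕ → (Fin m → Bool) → Fin m → Bool}
    (hG : ∀ κ, 1 ≤ κ → ∀ x i, EvenScale ℓ κ x i → (G κ x i = true ↔ G κ (flipAt i x) i = false))
    (x : Fin m → Bool) (i : Fin m) (hne : ℓ x ≠ ℓ (flipAt i x)) :
    orient ℓ G x i ↔ ¬ orient ℓ G (flipAt i x) i := by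
  unfold orient
  rw [edgeWeight_flip, flipAt_flipAt, uneven_flip]
  simp only [hne, hne.symm, ne_eq, not_false_eq_true, true_and]
  split_ifs with hu
  · rw [not_lt]
    exact ⟨le_of_lt, fun h => lt_of_le_of_ne h hne.symm⟩
  · rw [hG _ (one_le_scale _) x i (evenScale_scale hℓ hne), Bool.not_eq_true]

/-! ### Charging the gradient to the scales -/

/-- An edge oriented out of `x` is charged to the uneven edges, to a scale `κ ≤ K`, or, if its
weight is at most `2 ^ (-K)`, to the last term. -/
lemma sq_diff_le {m : ℕ} {ℓ : (Fin m → Bool) → ℝ} (hℓ : ∀ x, 0 ≤ ℓ x)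
    (G : ℕ → (Fin m → Bool) → Fin m → Bool) (K : ℕ) (x : Fin m → Bool) (i : Fin m) :
    (if orient ℓ G x i then ℓ x - ℓ (flipAt i x) else 0) ^ 2
      ≤ ℓ x ^ 2 * ((if Uneven ℓ x i ∧ ℓ (flipAt i x) < ℓ x then 1 else 0)
        + (∑ κ ∈ Finset.Icc 1 K, (6 / 2 ^ κ) ^ 2 * (if G κ x i = true then 1 else 0))
        + (3 / 2 ^ K) ^ 2) := by
  have hu0 : (0:ℝ) ≤ if Uneven ℓ x i ∧ ℓ (flipAt i x) < ℓ x then 1 else 0 := by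
    split_ifs <;> norm_num
  have ht : ∀ κ ∈ Finset.Icc 1 K,
      (0:ℝ) ≤ (6 / 2 ^ κ) ^ 2 * (if G κ x i = true then 1 else 0) := by
    intro κ _
    split_ifs <;> positivity
  have hs0 := Finset.sum_nonneg ht
  have hK0 : (0:ℝ) ≤ (3 / 2 ^ K) ^ 2 := by positivity
  have hx2 := sq_nonneg (ℓ x)
  by_cases ho : orient ℓ G x i
  swap
  · rw [if_neg ho]
    have := mul_nonneg hx2 (add_nonneg (add_nonneg hu0 hs0) hK0)
    simpa using this
  rw [if_pos ho]
  obtain ⟨hne, ho⟩ := ho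
  by_cases hu : Uneven ℓ x i
  · rw [if_pos hu] at ho
    have h1 : (ℓ x - ℓ (flipAt i x)) ^ 2 ≤ ℓ x ^ 2 :=
      pow_le_pow_left₀ (by linarith) (by linarith [hℓ (flipAt i x)]) 2
    refine h1.trans (le_mul_of_one_le_right hx2 ?_)
    rw [if_pos ⟨hu, ho⟩]
    linarith
  rw [if_neg hu] at ho
  have hd := abs_sub_le_of_not_uneven hℓ hne hu
  have hw := (evenScale_scale hℓ hne).2.2
  have hw2 : (2:ℝ) ^ (1 - (scale (edgeWeight ℓ x i) : ℤ)) = 2 / 2 ^ scale (edgeWeight ℓ x i) := by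
    rw [zpow_sub₀ two_ne_zero, zpow_one, zpow_natCast]
  rw [hw2] at hw
  have hk1 := one_le_scale (edgeWeight ℓ x i)
  set κ := scale (edgeWeight ℓ x i)
  have bound : ∀ b : ℝ, edgeWeight ℓ x i * 3 ≤ b →
      (ℓ x - ℓ (flipAt i x)) ^ 2 ≤ ℓ x ^ 2 * b ^ 2 := by
    intro b hb
    rw [← mul_pow, ← sq_abs]
    refine pow_le_pow_left₀ (abs_nonneg _) (hd.trans ?_) 2
    have := mul_le_mul_of_nonneg_left hb (hℓ x)
    linarith
  by_cases hκ : κ ≤ K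
  · have h1 : (6 / 2 ^ κ : ℝ) ^ 2 ≤
        ∑ κ ∈ Finset.Icc 1 K, (6 / 2 ^ κ : ℝ) ^ 2 * (if G κ x i = true then 1 else 0) := by
      have := Finset.single_le_sum ht (Finset.mem_Icc.2 ⟨hk1, hκ⟩)
      rwa [if_pos ho, mul_one] at this
    have h2 : edgeWeight ℓ x i * 3 ≤ 6 / 2 ^ κ := by
      have : (6:ℝ) / 2 ^ κ = 2 / 2 ^ κ * 3 := by ring
      linarith
    exact (bound _ h2).trans (mul_le_mul_of_nonneg_left (by linarith) hx2)
  · have h2 : edgeWeight ℓ x i * 3 ≤ 3 / 2 ^ K := by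
      have h3 : (2:ℝ) / 2 ^ κ ≤ 1 / 2 ^ K := by
        rw [div_le_div_iff₀ (by positivity) (by positivity), one_mul, mul_comm, ← pow_succ]
        exact pow_le_pow_right₀ one_le_two (by omega)
      have : (3:ℝ) / 2 ^ K = 1 / 2 ^ K * 3 := by ring
      linarith
    exact (bound _ h2).trans (mul_le_mul_of_nonneg_left (by linarith) hx2)

lemma sqrt_gradient_le {m : ℕ} {ℓ : (Fin m → Bool) → ℝ} (hℓ : ∀ x, 0 ≤ ℓ x)
    (G : ℕ → (Fin m → Bool) → Fin m → Bool) (K : ℕ) (x : Fin m → Bool) :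
    Real.sqrt (∑ i, (if orient ℓ G x i then ℓ x - ℓ (flipAt i x) else 0) ^ 2)
      ≤ ℓ x * Real.sqrt
          ((Finset.univ.filter (fun i => Uneven ℓ x i ∧ ℓ (flipAt i x) < ℓ x)).card)
        + (∑ κ ∈ Finset.Icc 1 K, 6 / 2 ^ κ * (ℓ x * Real.sqrt
          ((Finset.univ.filter (fun i => G κ x i = true)).card)))
        + ℓ x * (3 / 2 ^ K * Real.sqrt m) := by
  set u : ℝ := ((Finset.univ.filter (fun i => Uneven ℓ x i ∧ ℓ (flipAt i x) < ℓ x)).card : ℝ)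
    with hu
  set d : ℕ → ℝ := fun κ => ((Finset.univ.filter (fun i => G κ x i = true)).card : ℝ) with hd
  have e : ℓ x * Real.sqrt u + (∑ κ ∈ Finset.Icc 1 K, 6 / 2 ^ κ * (ℓ x * Real.sqrt (d κ)))
        + ℓ x * (3 / 2 ^ K * Real.sqrt m)
      = ℓ x * (Real.sqrt u + (∑ κ ∈ Finset.Icc 1 K, 6 / 2 ^ κ * Real.sqrt (d κ))
        + 3 / 2 ^ K * Real.sqrt m) := by
    rw [mul_add, mul_add, Finset.mul_sum]
    congr 2
    exact Finset.sum_congr rfl fun κ _ => by ring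
  rw [e]
  have hb : ∀ κ ∈ Finset.Icc 1 K, (0:ℝ) ≤ 6 / 2 ^ κ * Real.sqrt (d κ) := fun κ _ => by positivity
  have hB := Finset.sum_nonneg hb
  have hA := Real.sqrt_nonneg u
  have hC : 0 ≤ 3 / 2 ^ K * Real.sqrt m := by positivity
  refine Real.sqrt_le_iff.2 ⟨mul_nonneg (hℓ x) (by linarith), ?_⟩
  refine (Finset.sum_le_sum fun i _ => sq_diff_le hℓ G K x i).trans ?_
  rw [← Finset.mul_sum, mul_pow]
  refine mul_le_mul_of_nonneg_left ?_ (sq_nonneg _)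
  have hsq := Finset.sum_sq_le_sq_sum_of_nonneg hb
  have e1 : ∑ i, ((if Uneven ℓ x i ∧ ℓ (flipAt i x) < ℓ x then (1:ℝ) else 0)
        + (∑ κ ∈ Finset.Icc 1 K, (6 / 2 ^ κ) ^ 2 * (if G κ x i = true then 1 else 0))
        + (3 / 2 ^ K) ^ 2)
      = Real.sqrt u ^ 2 + (∑ κ ∈ Finset.Icc 1 K, (6 / 2 ^ κ * Real.sqrt (d κ)) ^ 2)
        + (3 / 2 ^ K * Real.sqrt m) ^ 2 := by
    rw [Finset.sum_add_distrib, Finset.sum_add_distrib, Finset.sum_comm]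
    congr 1
    · congr 1
      · rw [Real.sq_sqrt (Nat.cast_nonneg _), Finset.sum_boole]
      · refine Finset.sum_congr rfl fun κ _ => ?_
        rw [mul_pow, Real.sq_sqrt (Nat.cast_nonneg _), ← Finset.mul_sum, Finset.sum_boole]
    · rw [mul_pow, Real.sq_sqrt (Nat.cast_nonneg _)]
      simp [mul_comm]
  rw [e1]
  nlinarith [mul_nonneg hA hB, mul_nonneg hA hC, mul_nonneg hB hC]

lemma dTVU_le_one {m : ℕ} {ℓ : (Fin m → Bool) → ℝ} (hℓ : IsDist ℓ) : dTVU ℓ ≤ 1 := by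
  have hN : (0:ℝ) < Fintype.card (Fin m → Bool) := by exact_mod_cast Fintype.card_pos
  have h : ∑ a, |ℓ a - 1 / (Fintype.card (Fin m → Bool) : ℝ)|
      ≤ ∑ a, (ℓ a + 1 / (Fintype.card (Fin m → Bool) : ℝ)) := by
    refine Finset.sum_le_sum fun a _ => ?_
    have h1 := hℓ.1 a
    have h2 : 0 ≤ 1 / (Fintype.card (Fin m → Bool) : ℝ) := by positivity
    exact abs_le.2 ⟨by linarith, by linarith⟩
  rw [Finset.sum_add_distrib, hℓ.2, Finset.sum_const, Finset.card_univ, nsmul_eq_mul,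
    mul_one_div_cancel hN.ne'] at h
  unfold dTVU
  linarith

/-- The quantitative decomposition of the distance to uniformity over the scales up to `K`. -/
lemma dTVU_le_sum_scales {m : ℕ} {ℓ : (Fin m → Bool) → ℝ} (hℓ : IsDist ℓ)
    {G : ℕ → (Fin m → Bool) → Fin m → Bool}
    (hG : ∀ κ, 1 ≤ κ → ∀ x i, EvenScale ℓ κ x i → (G κ x i = true ↔ G κ (flipAt i x) i = false))
    (K : ℕ) :
    dTVU ℓ ≤ (∑ x : Fin m → Bool, ℓ x * Real.sqrt
          ((Finset.univ.filter (fun i => Uneven ℓ x i ∧ ℓ (flipAt i x) < ℓ x)).card))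
        + (∑ κ ∈ Finset.Icc 1 K, 6 / 2 ^ κ * ∑ x : Fin m → Bool, ℓ x * Real.sqrt
          ((Finset.univ.filter (fun i => G κ x i = true)).card))
        + 3 / 2 ^ K * Real.sqrt m := by
  have h1 := oriented_poincare ℓ (orient ℓ G) (orient_iff hℓ.1 hG)
  have h2 := Finset.sum_le_sum (s := (Finset.univ : Finset (Fin m → Bool))) fun x _ =>
    sqrt_gradient_le hℓ.1 G K x
  have h0 : 0 ≤ ∑ x, Real.sqrt (∑ i, (if orient ℓ G x i then ℓ x - ℓ (flipAt i x) else 0) ^ 2) :=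
    Finset.sum_nonneg fun _ _ => Real.sqrt_nonneg _
  rw [Finset.sum_add_distrib, Finset.sum_add_distrib, ← Finset.sum_mul, hℓ.2, one_mul,
    Finset.sum_comm] at h2
  simp only [← Finset.mul_sum] at h2
  refine le_trans ?_ h2
  rw [hℓ.2] at h1
  have e : dTVU ℓ = 1 / 2 * ∑ x, |ℓ x - 1 / 2 ^ m| := by
    simp [dTVU, Fintype.card_pi]
  rw [e]
  nlinarith [Real.pi_le_four]

/-- there are absolute `c, C > 0` such that for every `m ≥ 2`, every
distribution `ℓ` on `{-1,1}^m` with `β = d_TV(ℓ,U) > 0`, and any orientations `G κ` of the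
even edges at scale `κ` (for each `κ ≥ 1`): either
`E_{x∼ℓ}[√outdeg(x, G^{[u]})] ≥ c·β/log m` (where `G^{[u]}` directs each uneven edge from its
endpoint of larger `ℓ`-value), or there is `κ` with `1 ≤ κ ≤ C·log(2m/β)` and
`E_{x∼ℓ}[√outdeg(x, G κ)] ≥ c·2^κ·β/(log m·log(2m/β))`. -/
theorem stmt10 : ∃ c > (0:ℝ), ∃ C > (0:ℝ), ∀ m : ℕ, 2 ≤ m →
    ∀ ℓ : (Fin m → Bool) → ℝ, IsDist ℓ → ∀ β : ℝ, β = dTVU ℓ → 0 < β →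
    ∀ G : ℕ → (Fin m → Bool) → Fin m → Bool,
      (∀ κ, 1 ≤ κ → ∀ x i, G κ x i = true → EvenScale ℓ κ x i) →
      (∀ κ, 1 ≤ κ → ∀ x i, EvenScale ℓ κ x i → (G κ x i = true ↔ G κ (flipAt i x) i = false)) →
    (c * β / Real.log m ≤
        ∑ x : Fin m → Bool, ℓ x * Real.sqrt
          ((Finset.univ.filter (fun i => Uneven ℓ x i ∧ ℓ (flipAt i x) < ℓ x)).card))
    ∨ (∃ κ : ℕ, 1 ≤ κ ∧ (κ : ℝ) ≤ C * Real.log (2 * m / β) ∧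
        c * 2 ^ κ * β / (Real.log m * Real.log (2 * m / β)) ≤
          ∑ x : Fin m → Bool, ℓ x * Real.sqrt
            ((Finset.univ.filter (fun i => G κ x i = true)).card)) := by
  refine ⟨1 / 100, by norm_num, 5, by norm_num, ?_⟩
  intro m hm ℓ hℓ β hβ hβ0 G _ hG
  have hβ1 : β ≤ 1 := hβ ▸ dTVU_le_one hℓ
  have hm2 : (2:ℝ) ≤ m := by exact_mod_cast hm
  set q : ℝ := 2 * m / β with hq
  have hq4 : 4 ≤ q := by
    rw [hq, le_div_iff₀ hβ0]
    linarith
  set L := Real.log q with hL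
  have hL0 : 0 < L := Real.log_pos (by linarith)
  have hlog2 : 0.6931471803 < Real.log 2 := Real.log_two_gt_d9
  have hlogm : 1 / 2 ≤ Real.log m := by
    have := Real.log_le_log two_pos hm2
    linarith
  set K := ⌊5 * L⌋₊ with hK
  have hKle : (K:ℝ) ≤ 5 * L := Nat.floor_le (by positivity)
  have hKlt : 5 * L < K + 1 := Nat.lt_floor_add_one _
  -- `5 * log 2 > 3`, so `2 ^ (K + 1)` exceeds `q ^ 3`, which makes the truncation error small.
  have hpow : q ^ 3 ≤ (2:ℝ) ^ (K + 1) := by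
    rw [← Real.log_le_log_iff (by positivity) (by positivity), Real.log_pow, Real.log_pow]
    push_cast
    nlinarith
  have htail : 3 / 2 ^ K * Real.sqrt m ≤ 3 / 16 * β := by
    have hsm : Real.sqrt m ≤ m := Real.sqrt_le_iff.2 ⟨by linarith, by nlinarith⟩
    have hqm : q * β = 2 * m := div_mul_cancel₀ _ hβ0.ne'
    have h8 : 16 * (m:ℝ) ≤ β * 2 ^ K := by
      have h1 : 16 * q ≤ q ^ 3 := by
        nlinarith [mul_nonneg (by linarith : (0:ℝ) ≤ q) (by nlinarith : (0:ℝ) ≤ q ^ 2 - 16)]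
      rw [pow_succ (2:ℝ) K] at hpow
      nlinarith
    rw [div_mul_eq_mul_div, div_le_iff₀ (by positivity)]
    linarith
  by_contra! hcon
  obtain ⟨hu, he⟩ := hcon
  have hmain := dTVU_le_sum_scales hℓ hG K
  rw [← hβ] at hmain
  have hu' : 1 / 100 * β / Real.log m ≤ 1 / 50 * β := by
    rw [div_le_iff₀ (by linarith)]
    nlinarith
  have hscale : ∀ κ ∈ Finset.Icc 1 K, 6 / 2 ^ κ * ∑ x : Fin m → Bool, ℓ x * Real.sqrt
      ((Finset.univ.filter (fun i => G κ x i = true)).card) ≤ 12 / 100 * β / L := by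
    intro κ hκ
    obtain ⟨h1, h2⟩ := Finset.mem_Icc.1 hκ
    have h3 : (κ:ℝ) ≤ 5 * L := le_trans (by exact_mod_cast h2) hKle
    have h4 := mul_le_mul_of_nonneg_left (he κ h1 h3).le (by positivity : (0:ℝ) ≤ 6 / 2 ^ κ)
    refine h4.trans ?_
    have h5 : (6:ℝ) / 2 ^ κ * (1 / 100 * 2 ^ κ * β / (Real.log m * L))
        = 6 / 100 * β / L / Real.log m := by
      have : Real.log m ≠ 0 := by linarith
      field_simp
    rw [h5, div_le_iff₀ (by linarith)]
    have h6 : 0 < β / L := by positivity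
    have h7 : 6 / 100 * β / L = 6 / 100 * (β / L) := by ring
    have h8 : 12 / 100 * β / L = 12 / 100 * (β / L) := by ring
    rw [h7, h8]
    nlinarith
  have hsum := Finset.sum_le_sum hscale
  rw [Finset.sum_const, Nat.card_Icc, nsmul_eq_mul, Nat.add_sub_cancel] at hsum
  have h9 : (K:ℝ) * (12 / 100 * β / L) ≤ 60 / 100 * β := by
    rw [mul_div_assoc', div_le_iff₀ hL0]
    nlinarith
  linarith

end Subcube
end
end

section
/- Let p be a distribution on {-1,1}^n, t ∈ {1, …, n−1}, let π = (π(1),…,π(t+1)) be a sequence of t+1 distinct indices from [n], let y ∈ {-1,1}^n, and let i ∈ [t+1]. Write T = S(π_{-i}) and z = y_{T̄}. If the hypercube edge {z, z^{(π(i))}} is uneven with respect to the projected distribution p_{T̄}, then |μ(p_{|ρ(π,y)})_{π(i)}| ≥ 1/3; and if it is even at scale κ with respect to p_{T̄} (for an integer κ ≥ 1), then |μ(p_{|ρ(π,y)})_{π(i)}| ≥ 2^{−κ−1}. (In either case the edge is nonzero, so Pr_{x∼p}[x_{S̄(π)} = y_{S̄(π)}] > 0 and the restricted distribution p_{|ρ(π,y)}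 is well defined.) -/
/-!
Write `k = π i`, so that `S = S(π)` is the disjoint union of `T` and `{k}`. The event that `x` agrees
with `y` off `S` splits according to the value of `x k`: either `x` agrees with `y` off `T`, or `x`
agrees with the `k`-flip of `y` off `T`. Hence the mass of the event is `a + b`
(`offMass_insert`), while the signed mass that is the numerator of the conditional mean of `x k` is
`±(a - b)` (`signedMass_insert`). Thus the conditional mean has absolute value `|a - b| / (a + b)`,
and since `a + b ≤ 2 max(a, b)` this is at least half the weight of the edge
(`half_weight_le_condMean`). Both claims follow by halving the lower bound on the weight.
-/

open scoped Classical

noncomputable section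

namespace Subcube

theorem agree_flipAt_iff {n : ℕ} {T : Finset (Fin n)} {k : Fin n} (hk : k ∉ T)
    (x y : Fin n → Bool) :
    (∀ j ∉ T, x j = flipAt k y j) ↔ (∀ j ∉ insert k T, x j = y j) ∧ x k = !(y k) := by
  constructor
  · intro h
    refine ⟨fun j hj => ?_, by simpa [flipAt] using h k hk⟩
    rw [Finset.mem_insert, not_or] at hj
    simpa [flipAt, hj.1] using h j hj.2
  · rintro ⟨h, h'⟩ j hj
    by_cases e : j = k
    · subst e; simpa [flipAt] using h'
    · simpa [flipAt, e] using h j (by simp [e, hj])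

theorem agree_iff {n : ℕ} {T : Finset (Fin n)} {k : Fin n} (hk : k ∉ T)
    (x y : Fin n → Bool) :
    (∀ j ∉ T, x j = y j) ↔ (∀ j ∉ insert k T, x j = y j) ∧ x k = y k := by
  constructor
  · intro h
    exact ⟨fun j hj => h j fun hT => hj (Finset.mem_insert_of_mem hT), h k hk⟩
  · rintro ⟨h, h'⟩ j hj
    by_cases e : j = k
    · subst e; exact h'
    · exact h j (by simp [e, hj])

theorem offMass_insert {n : ℕ} (p : (Fin n → Bool) → ℝ) {T : Finset (Fin n)} {k : Fin n}
    (hk : k ∉ T) (y : Fin n → Bool) :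
    offMass p (insert k T) y = offMass p T y + offMass p T (flipAt k y) := by
  unfold offMass
  rw [← Finset.sum_add_distrib]
  refine Finset.sum_congr rfl fun x _ => ?_
  simp only [agree_flipAt_iff hk, agree_iff hk x y]
  by_cases h : ∀ j ∉ insert k T, x j = y j
  · simp only [eq_true h, true_and, if_true]
    cases x k <;> cases y k <;> simp
  · simp only [h, false_and, if_false, add_zero]

theorem signedMass_insert {n : ℕ} (p : (Fin n → Bool) → ℝ) {T : Finset (Fin n)} {k : Fin n}
    (hk : k ∉ T) (y : Fin n → Bool) :
    (∑ x : Fin n → Bool, if ∀ j ∉ insert k T, x j = y j then p x * sgn (x k) else 0) =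
      sgn (y k) * (offMass p T y - offMass p T (flipAt k y)) := by
  unfold offMass
  rw [← Finset.sum_sub_distrib, Finset.mul_sum]
  refine Finset.sum_congr rfl fun x _ => ?_
  simp only [agree_flipAt_iff hk, agree_iff hk x y]
  by_cases h : ∀ j ∉ insert k T, x j = y j
  · simp only [eq_true h, true_and, if_true]
    cases x k <;> cases y k <;> simp [sgn]
  · simp only [h, false_and, if_false, sub_zero, mul_zero]

theorem offMass_nonneg {n : ℕ} {p : (Fin n → Bool) → ℝ} (hp : IsDist p) (S : Finset (Fin n))
    (y : Fin n → Bool) : 0 ≤ offMass p S y := by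
  refine Finset.sum_nonneg fun x _ => ?_
  split_ifs
  · exact hp.1 x
  · exact le_rfl

theorem abs_sgn (b : Bool) : |sgn b| = 1 := by cases b <;> simp [sgn]

/-- Half the weight of a nonzero edge in direction `k` bounds from below the bias of coordinate `k`
once `k` is freed, because `a + b ≤ 2 max(a, b)` for the endpoint masses `a`, `b`. -/
theorem half_weight_le_condMean {n : ℕ} {p : (Fin n → Bool) → ℝ} (hp : IsDist p)
    {T : Finset (Fin n)} {k : Fin n} (hk : k ∉ T) (y : Fin n → Bool)
    (hne : offMass p T y ≠ offMass p T (flipAt k y)) :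
    0 < offMass p (insert k T) y ∧
      |offMass p T y - offMass p T (flipAt k y)| /
          max (offMass p T y) (offMass p T (flipAt k y)) / 2 ≤
        |condMean p (insert k T) y k| := by
  have ha := offMass_nonneg hp T y
  have hb := offMass_nonneg hp T (flipAt k y)
  have hS := offMass_insert p hk y
  have hpos : 0 < offMass p (insert k T) y := by
    rcases lt_or_gt_of_ne hne with h | h <;> linarith
  refine ⟨hpos, ?_⟩
  unfold condMean
  rw [signedMass_insert p hk y, abs_div, abs_mul, abs_sgn, one_mul, abs_of_pos hpos, div_div]
  refine div_le_div_of_nonneg_left (abs_nonneg _) hpos ?_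
  linarith [le_max_left (offMass p T y) (offMass p T (flipAt k y)),
    le_max_right (offMass p T y) (offMass p T (flipAt k y))]

/-- Let `π` be a sequence of `t+1` distinct indices, `y ∈ {-1,1}^n`, `i ∈ [t+1]`,
`T = S(π_{-i})`, and let `a = p_{T̄}(y_{T̄})`, `b = p_{T̄}(y_{T̄}^{(π(i))})` be the projected
masses of the two endpoints of the edge `{z, z^{(π(i))}}`. If this edge is uneven w.r.t.
`p_{T̄}` then the restriction `p_{|ρ(π,y)}` is well defined and `|μ(p_{|ρ(π,y)})_{π(i)}| ≥ 1/3`;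
if it is even at scale `κ ≥ 1` then `|μ(p_{|ρ(π,y)})_{π(i)}| ≥ 2^{−κ−1}`. -/
theorem stmt11 (n t : ℕ) (ht : 1 ≤ t) (htn : t < n)
    (p : (Fin n → Bool) → ℝ) (hp : IsDist p)
    (π : Fin (t+1) → Fin n) (hπ : Function.Injective π)
    (y : Fin n → Bool) (i : Fin (t+1)) :
    ∀ a b : ℝ,
      a = offMass p (((Finset.univ : Finset (Fin (t+1))).erase i).image π) y →
      b = offMass p (((Finset.univ : Finset (Fin (t+1))).erase i).image π) (flipAt (π i) y) →
      ((a ≠ b ∧ 2/3 ≤ |a - b| / max a b →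
          0 < offMass p ((Finset.univ : Finset (Fin (t+1))).image π) y ∧
          1/3 ≤ |condMean p ((Finset.univ : Finset (Fin (t+1))).image π) y (π i)|) ∧
        (∀ κ : ℕ, 1 ≤ κ → a ≠ b → (2:ℝ) ^ (-(κ:ℤ)) < |a - b| / max a b →
          |a - b| / max a b ≤ (2:ℝ) ^ (1 - (κ:ℤ)) →
          0 < offMass p ((Finset.univ : Finset (Fin (t+1))).image π) y ∧
          (2:ℝ) ^ (-(κ:ℤ) - 1) ≤
            |condMean p ((Finset.univ : Finset (Fin (t+1))).image π) y (π i)|)) := by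
  rintro a b rfl rfl
  have hk : π i ∉ ((Finset.univ : Finset (Fin (t+1))).erase i).image π := by
    intro h
    obtain ⟨j, hj, e⟩ := Finset.mem_image.1 h
    exact Finset.ne_of_mem_erase hj (hπ e)
  have hS : (Finset.univ : Finset (Fin (t+1))).image π =
      insert (π i) (((Finset.univ : Finset (Fin (t+1))).erase i).image π) := by
    rw [← Finset.image_insert, Finset.insert_erase (Finset.mem_univ i)]
  rw [hS]
  refine ⟨fun ⟨hne, hw⟩ => ?_, fun κ _ hne hw _ => ?_⟩
  · obtain ⟨h1, h2⟩ := half_weight_le_condMean hp hk y hne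
    exact ⟨h1, by linarith⟩
  · obtain ⟨h1, h2⟩ := half_weight_le_condMean hp hk y hne
    refine ⟨h1, ?_⟩
    rw [zpow_sub_one₀ (two_ne_zero' ℝ)]
    linarith

end Subcube
end
end

section
/- Let p be a distribution on {-1,1}^d, let q ≥ 1 be an integer and τ > 0, and suppose ‖μ(p)‖₂² > 2τ. Let Z = ⟨X̄, Ȳ⟩ where X̄ and Ȳ are the empirical means of two independent blocks of q i.i.d. samples from p. If Pr[Z ≤ τ] ≥ 1/3, then ‖Σ(p)‖_F² ≥ τ²·q² / 48². -/
/-!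
The statement is Chebyshev's inequality for `Z`. Write `m = ‖μ(p)‖₂²` and `F = ‖Σ(p)‖_F`. The
mean of `Z` is `m`. The second-moment matrix of an empirical mean is
`B = Σ(p) / q + (1 - 1/q) μ μᵀ` (`sum_prod_mul_mean_mul_mean`), and by independence of the two
blocks `E[Z²] = ‖B‖_F²`. Expanding the square and bounding `μᵀ Σ(p) μ ≤ F m` by Cauchy–Schwarz
(`quadForm_sq_le`) gives `Var Z ≤ F² / q² + 2 F m / q`. Since `τ < m / 2`, the event `Z ≤ τ` forces
`m - Z ≥ m / 2`, so `m² / 12 ≤ Var Z`, which is impossible when `F / q < τ / 48 < m / 96`.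
-/

open scoped Classical

noncomputable section

namespace Subcube

/-- The second-moment matrix `Σ(p)_{ij} = E_{x∼p}[x_i x_j]`. -/
def covMat {d : ℕ} (p : (Fin d → Bool) → ℝ) (i j : Fin d) : ℝ :=
  ∑ x : Fin d → Bool, p x * (sgn (x i) * sgn (x j))

/-- Squared Frobenius norm of `Σ(p)`. -/
def frobSq {d : ℕ} (p : (Fin d → Bool) → ℝ) : ℝ := ∑ i : Fin d, ∑ j : Fin d, covMat p i j ^ 2

/-- The statistic `Z = ⟨X̄, Ȳ⟩` computed from an outcome `ω = (X, Y)` consisting of two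
blocks of `q` samples. -/
def Zstat {d q : ℕ} (ω : (Fin q → (Fin d → Bool)) × (Fin q → (Fin d → Bool))) : ℝ :=
  ∑ i : Fin d, ((∑ k : Fin q, sgn (ω.1 k i)) / q) * ((∑ k : Fin q, sgn (ω.2 k i)) / q)

/-- Probability of the outcome `ω` under `2q` i.i.d. samples from `p`. -/
def sampleW {d q : ℕ} (p : (Fin d → Bool) → ℝ)
    (ω : (Fin q → (Fin d → Bool)) × (Fin q → (Fin d → Bool))) : ℝ :=
  (∏ k : Fin q, p (ω.1 k)) * (∏ k : Fin q, p (ω.2 k))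

/-- Expectation of a product over independent samples is the product of expectations. -/
lemma sum_prod_mul_prod {V : Type*} [Fintype V] {q : ℕ} (p : V → ℝ) (h : Fin q → V → ℝ) :
    ∑ x : Fin q → V, (∏ k, p (x k)) * ∏ k, h k (x k) = ∏ k, ∑ v, p v * h k v := by
  rw [Finset.prod_univ_sum, Fintype.piFinset_univ]
  exact Finset.sum_congr rfl fun x _ => Finset.prod_mul_distrib.symm

lemma sum_prod_eq_one {V : Type*} [Fintype V] {q : ℕ} (p : V → ℝ) (hp : ∑ v, p v = 1) :
    ∑ x : Fin q → V, ∏ k, p (x k) = 1 := by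
  simpa [hp] using sum_prod_mul_prod (q := q) p (fun _ _ => 1)

/-- A single coordinate of an i.i.d. sample has law `p`. -/
lemma sum_prod_mul_eval {V : Type*} [Fintype V] {q : ℕ} (p : V → ℝ) (hp : ∑ v, p v = 1)
    (f : V → ℝ) (a : Fin q) :
    ∑ x : Fin q → V, (∏ k, p (x k)) * f (x a) = ∑ v, p v * f v := by
  have h := sum_prod_mul_prod (q := q) p (fun k v => if k = a then f v else 1)
  rw [Finset.prod_eq_single a (by intro b _ hb; simp [hb, hp]) (by simp)] at h
  simpa using h

/-- Two distinct coordinates of an i.i.d. sample are uncorrelated. -/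
lemma sum_prod_mul_eval_mul_eval {V : Type*} [Fintype V] {q : ℕ} (p : V → ℝ)
    (hp : ∑ v, p v = 1) (f g : V → ℝ) {a b : Fin q} (hab : a ≠ b) :
    ∑ x : Fin q → V, (∏ k, p (x k)) * (f (x a) * g (x b)) =
      (∑ v, p v * f v) * ∑ v, p v * g v := by
  have h := sum_prod_mul_prod (q := q) p
    (fun k v => (if k = a then f v else 1) * (if k = b then g v else 1))
  rw [Finset.prod_eq_mul a b hab (by rintro c _ ⟨h1, h2⟩; simp [h1, h2, hp])
    (by simp) (by simp)] at h
  simp only [Finset.prod_mul_distrib] at h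
  simpa [hab, hab.symm] using h

lemma sum_prod_mul_mean {V : Type*} [Fintype V] {q : ℕ} (hq : 1 ≤ q) (p : V → ℝ)
    (hp : ∑ v, p v = 1) (f : V → ℝ) :
    ∑ x : Fin q → V, (∏ k, p (x k)) * ((∑ k, f (x k)) / q) = ∑ v, p v * f v := by
  have hq0 : (q : ℝ) ≠ 0 := by positivity
  simp_rw [← mul_div_assoc, ← Finset.sum_div, Finset.mul_sum]
  rw [Finset.sum_comm]
  simp_rw [sum_prod_mul_eval p hp f]
  simp [hq0]

/-- Mixed second moment of two empirical means: the `q` diagonal pairs of samples contribute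
`E[f g]` and the `q² - q` off-diagonal pairs contribute `E[f] E[g]`. -/
lemma sum_prod_mul_mean_mul_mean {V : Type*} [Fintype V] {q : ℕ} (hq : 1 ≤ q) (p : V → ℝ)
    (hp : ∑ v, p v = 1) (f g : V → ℝ) :
    ∑ x : Fin q → V, (∏ k, p (x k)) * (((∑ k, f (x k)) / q) * ((∑ k, g (x k)) / q)) =
      (∑ v, p v * (f v * g v)) / q +
        (1 - 1 / q) * ((∑ v, p v * f v) * ∑ v, p v * g v) := by
  have hq0 : (q : ℝ) ≠ 0 := by positivity
  have key : ∀ a b : Fin q, ∑ x : Fin q → V, (∏ k, p (x k)) * (f (x a) * g (x b)) =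
      (∑ v, p v * f v) * (∑ v, p v * g v) +
        if a = b then (∑ v, p v * (f v * g v)) - (∑ v, p v * f v) * ∑ v, p v * g v else 0 := by
    intro a b
    split_ifs with hab
    · subst hab
      rw [sum_prod_mul_eval p hp (fun v => f v * g v) a]
      ring
    · rw [sum_prod_mul_eval_mul_eval p hp f g hab, add_zero]
  generalize ∑ v, p v * f v = A, ∑ v, p v * g v = B, ∑ v, p v * (f v * g v) = C at key ⊢
  simp_rw [div_mul_div_comm, ← mul_div_assoc, ← Finset.sum_div, Finset.sum_mul_sum,
    Finset.mul_sum]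
  rw [Finset.sum_comm]
  simp_rw [Finset.sum_comm (s := (Finset.univ : Finset (Fin q → V))), key]
  simp [Finset.sum_add_distrib]
  field_simp
  ring

lemma sum_prodMass_mul {α : Type*} [Fintype α] (w f g : α → ℝ) :
    ∑ ω : α × α, (w ω.1 * w ω.2) * (f ω.1 * g ω.2) =
      (∑ x, w x * f x) * ∑ y, w y * g y := by
  rw [Fintype.sum_prod_type, Finset.sum_mul_sum]
  exact Finset.sum_congr rfl fun x _ => Finset.sum_congr rfl fun y _ => by ring

/-- Cauchy–Schwarz for the Frobenius inner product of a matrix `S` with `v vᵀ`. -/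
lemma quadForm_sq_le {d : ℕ} (S : Fin d → Fin d → ℝ) (v : Fin d → ℝ) :
    (∑ i, ∑ j, S i j * (v i * v j)) ^ 2 ≤ (∑ i, ∑ j, S i j ^ 2) * normSq v ^ 2 := by
  have h := Finset.sum_mul_sq_le_sq_mul_sq (Finset.univ : Finset (Fin d × Fin d))
    (fun z => S z.1 z.2) (fun z => v z.1 * v z.2)
  simp only [Fintype.sum_prod_type] at h
  have h2 : ∑ i, ∑ j, (v i * v j) ^ 2 = normSq v ^ 2 := by
    simp only [normSq, sq (∑ i, v i ^ 2), Finset.sum_mul_sum, mul_pow]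
  rwa [h2] at h

/-- Unfolds `meanVec` on `Fin d`, where its `Fintype` instance (built from classical decidable
equality of the index type) differs syntactically from the one found on `Fin d → Bool`. -/
lemma meanVec_apply {d : ℕ} (p : (Fin d → Bool) → ℝ) (i : Fin d) :
    meanVec p i = ∑ v : Fin d → Bool, p v * sgn (v i) := by
  rw [meanVec]
  congr!

lemma sum_sampleW {d q : ℕ} (p : (Fin d → Bool) → ℝ) (hp : IsDist p) :
    ∑ ω : (Fin q → (Fin d → Bool)) × (Fin q → (Fin d → Bool)), sampleW p ω = 1 := by
  have h := sum_prodMass_mul (fun x : Fin q → (Fin d → Bool) => ∏ k, p (x k))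
    (fun _ => 1) (fun _ => 1)
  simpa [sampleW, sum_prod_eq_one p hp.2] using h

lemma sum_sampleW_mul_Zstat {d q : ℕ} (hq : 1 ≤ q) (p : (Fin d → Bool) → ℝ) (hp : IsDist p) :
    ∑ ω : (Fin q → (Fin d → Bool)) × (Fin q → (Fin d → Bool)), sampleW p ω * Zstat ω =
      normSq (meanVec p) := by
  simp only [Zstat, Finset.mul_sum, normSq]
  rw [Finset.sum_comm]
  refine Finset.sum_congr rfl fun i _ => ?_
  have h := sum_prodMass_mul (fun x : Fin q → (Fin d → Bool) => ∏ k, p (x k))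
    (fun x => (∑ k, sgn (x k i)) / q) (fun x => (∑ k, sgn (x k i)) / q)
  rw [sum_prod_mul_mean hq p hp.2 (fun v => sgn (v i)), ← sq] at h
  rw [meanVec_apply]
  exact h

/-- `E[Z²]` is the squared Frobenius norm of the second-moment matrix of the empirical mean. -/
lemma sum_sampleW_mul_Zstat_sq {d q : ℕ} (hq : 1 ≤ q) (p : (Fin d → Bool) → ℝ)
    (hp : IsDist p) :
    ∑ ω : (Fin q → (Fin d → Bool)) × (Fin q → (Fin d → Bool)), sampleW p ω * Zstat ω ^ 2 =
      ∑ i, ∑ j, (covMat p i j / q + (1 - 1 / q) * (meanVec p i * meanVec p j)) ^ 2 := by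
  simp only [Zstat, sq (∑ i : Fin d, _), Finset.sum_mul_sum]
  simp only [Finset.mul_sum]
  rw [Finset.sum_comm]
  refine Finset.sum_congr rfl fun i _ => ?_
  rw [Finset.sum_comm]
  refine Finset.sum_congr rfl fun j _ => ?_
  have h := sum_prodMass_mul (fun x : Fin q → (Fin d → Bool) => ∏ k, p (x k))
    (fun x => ((∑ k, sgn (x k i)) / q) * ((∑ k, sgn (x k j)) / q))
    (fun x => ((∑ k, sgn (x k i)) / q) * ((∑ k, sgn (x k j)) / q))
  rw [sum_prod_mul_mean_mul_mean hq p hp.2 (fun v => sgn (v i)) (fun v => sgn (v j)), ← sq] at h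
  rw [show covMat p i j / q + (1 - 1 / q) * (meanVec p i * meanVec p j) =
    (∑ v, p v * (sgn (v i) * sgn (v j))) / q +
      (1 - 1 / q) * ((∑ v, p v * sgn (v i)) * ∑ v, p v * sgn (v j)) by
        rw [meanVec_apply, meanVec_apply, covMat], ← h]
  refine Finset.sum_congr rfl fun ω _ => ?_
  rw [sampleW]
  ring

/-- The bound `E[Z²] - m² ≤ F² / q² + 2 F m / q` on the variance of `Z`. -/
lemma secondMoment_le {d q : ℕ} (hq : 1 ≤ q) (p : (Fin d → Bool) → ℝ) :
    ∑ i, ∑ j, (covMat p i j / q + (1 - 1 / q) * (meanVec p i * meanVec p j)) ^ 2 ≤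
      (√(frobSq p) / q) ^ 2 + 2 * (√(frobSq p) / q) * normSq (meanVec p) +
        normSq (meanVec p) ^ 2 := by
  have hF : 0 ≤ frobSq p :=
    Finset.sum_nonneg fun i _ => Finset.sum_nonneg fun j _ => sq_nonneg _
  have hm : 0 ≤ normSq (meanVec p) := Finset.sum_nonneg fun i _ => sq_nonneg _
  have hcs := quadForm_sq_le (covMat p) (meanVec p)
  set Q := ∑ i, ∑ j, covMat p i j * (meanVec p i * meanVec p j) with hQ
  have hQle : Q ≤ √(frobSq p) * normSq (meanVec p) := by
    refine le_trans (Real.le_sqrt_of_sq_le hcs) (le_of_eq ?_)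
    rw [Real.sqrt_mul' _ (sq_nonneg _), Real.sqrt_sq hm, frobSq]
  have hexp : ∑ i, ∑ j, (covMat p i j / q + (1 - 1 / q) * (meanVec p i * meanVec p j)) ^ 2 =
      frobSq p / q ^ 2 + 2 * (1 / q) * (1 - 1 / q) * Q +
        (1 - 1 / q) ^ 2 * normSq (meanVec p) ^ 2 := by
    have h2 : normSq (meanVec p) ^ 2 = ∑ i, ∑ j, (meanVec p i * meanVec p j) ^ 2 := by
      simp only [normSq, sq (∑ i, meanVec p i ^ 2), Finset.sum_mul_sum, mul_pow]
    rw [h2, hQ, frobSq]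
    simp only [Finset.sum_div, Finset.mul_sum, ← Finset.sum_add_distrib]
    refine Finset.sum_congr rfl fun i _ => Finset.sum_congr rfl fun j _ => ?_
    ring
  have hq1 : (1 : ℝ) ≤ q := by exact_mod_cast hq
  have hr0 : (0 : ℝ) ≤ 1 / q := by positivity
  have hr1 : (1 : ℝ) / q ≤ 1 := by rw [div_le_one (by linarith)]; exact hq1
  have hs := Real.sqrt_nonneg (frobSq p)
  have hss := Real.sq_sqrt hF
  rw [hexp, div_pow, hss]
  have h1 : 2 * (1 / q) * (1 - 1 / q) * Q ≤
      2 * (√(frobSq p) / q) * normSq (meanVec p) := by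
    calc 2 * (1 / q) * (1 - 1 / q) * Q
        ≤ 2 * (1 / q) * (1 - 1 / q) * (√(frobSq p) * normSq (meanVec p)) :=
          mul_le_mul_of_nonneg_left hQle
            (mul_nonneg (by positivity) (by linarith))
      _ ≤ 2 * (1 / q) * 1 * (√(frobSq p) * normSq (meanVec p)) := by
          gcongr
          linarith
      _ = _ := by ring
  have h2 : (1 - 1 / (q : ℝ)) ^ 2 * normSq (meanVec p) ^ 2 ≤ normSq (meanVec p) ^ 2 :=
    mul_le_of_le_one_left (sq_nonneg _) (pow_le_one₀ (by linarith) (by linarith))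
  linarith

/-- if `‖μ(p)‖₂² > 2τ` and `Pr[Z ≤ τ] ≥ 1/3` (for `Z = ⟨X̄,Ȳ⟩` computed from
two independent blocks of `q` i.i.d. samples from `p`), then `‖Σ(p)‖_F² ≥ τ²q²/48²`. -/
theorem stmt18 (d q : ℕ) (hq : 1 ≤ q) (τ : ℝ) (hτ : 0 < τ)
    (p : (Fin d → Bool) → ℝ) (hp : IsDist p)
    (hμ : 2 * τ < normSq (meanVec p))
    (hprob : 1/3 ≤ ∑ ω : (Fin q → (Fin d → Bool)) × (Fin q → (Fin d → Bool)),
        if Zstat ω ≤ τ then sampleW p ω else 0) :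
    τ ^ 2 * (q:ℝ) ^ 2 / 48 ^ 2 ≤ frobSq p := by
  set m := normSq (meanVec p) with hm
  have hq0 : (0 : ℝ) < q := by positivity
  have hvar : ∑ ω : (Fin q → (Fin d → Bool)) × (Fin q → (Fin d → Bool)),
      sampleW p ω * (m - Zstat ω) ^ 2 ≤ (√(frobSq p) / q) ^ 2 + 2 * (√(frobSq p) / q) * m := by
    have hZ2 := (sum_sampleW_mul_Zstat_sq hq p hp).trans_le (secondMoment_le hq p)
    have hexp : ∑ ω : (Fin q → (Fin d → Bool)) × (Fin q → (Fin d → Bool)),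
        sampleW p ω * (m - Zstat ω) ^ 2 =
        m ^ 2 * ∑ ω : (Fin q → (Fin d → Bool)) × (Fin q → (Fin d → Bool)), sampleW p ω
        - 2 * m * ∑ ω : (Fin q → (Fin d → Bool)) × (Fin q → (Fin d → Bool)),
            sampleW p ω * Zstat ω
        + ∑ ω : (Fin q → (Fin d → Bool)) × (Fin q → (Fin d → Bool)),
            sampleW p ω * Zstat ω ^ 2 := by
      rw [Finset.mul_sum, Finset.mul_sum, ← Finset.sum_sub_distrib, ← Finset.sum_add_distrib]
      exact Finset.sum_congr rfl fun ω _ => by ring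
    rw [hexp, sum_sampleW p hp, sum_sampleW_mul_Zstat hq p hp, ← hm]
    rw [← hm] at hZ2
    linarith
  -- Chebyshev: on the event `Z ≤ τ` the deviation `m - Z` is at least `m / 2`.
  have hcheb : m ^ 2 / 4 * (1 / 3) ≤
      ∑ ω : (Fin q → (Fin d → Bool)) × (Fin q → (Fin d → Bool)),
        sampleW p ω * (m - Zstat ω) ^ 2 := by
    refine (mul_le_mul_of_nonneg_left hprob (by positivity)).trans ?_
    rw [Finset.mul_sum]
    refine Finset.sum_le_sum fun ω _ => ?_
    have hw : 0 ≤ sampleW p ω :=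
      mul_nonneg (Finset.prod_nonneg fun k _ => hp.1 _) (Finset.prod_nonneg fun k _ => hp.1 _)
    split_ifs with h
    · have : m ^ 2 / 4 ≤ (m - Zstat ω) ^ 2 := by nlinarith
      rw [mul_comm]
      exact mul_le_mul_of_nonneg_left this hw
    · rw [mul_zero]
      positivity
  have hF : 0 ≤ frobSq p :=
    Finset.sum_nonneg fun i _ => Finset.sum_nonneg fun j _ => sq_nonneg _
  have ht : τ / 48 ≤ √(frobSq p) / q := by
    by_contra! hlt
    have ht0 : 0 ≤ √(frobSq p) / q := by positivity
    nlinarith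
  rw [le_div_iff₀ hq0] at ht
  calc τ ^ 2 * (q : ℝ) ^ 2 / 48 ^ 2 = (τ / 48 * q) ^ 2 := by ring
    _ ≤ √(frobSq p) ^ 2 := by gcongr
    _ = frobSq p := Real.sq_sqrt hF

end Subcube
end
end
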